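/- Every element y^m w of H^1 with m ≥ 0 and w a word in H^0 admits a unique representation y^m w = w0 + w1 ш̄ y + w2 ш̄ y^{ш̄2} + ⋯ + wm ш̄ y^{ш̄m} with w0, w1, …, wm ∈ H^0, where y^{ш̄i} denotes the i-fold n-shuffle product of y with itself; consequently (H^1, ш̄) is isomorphic to the polynomial algebra (H^0, ш̄)[y]. -/

import Mathlib

open scoped BigOperators

/-- The two-letter alphabet {x, y}. -/
inductive Letter : Type
  | x : Letter
  | y : Letter
deriving DecidableEq

/-- `H = ℚ⟨x,y⟩`, the noncommutative polynomial ring over ℚ in two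
indeterminates, realized as the monoid algebra of the free monoid on `{x,y}`. -/
abbrev H : Type := MonoidAlgebra ℚ (FreeMonoid Letter)

namespace H

/-- The monomial (word) of `H` corresponding to an element of the free monoid. -/
noncomputable def word (w : FreeMonoid Letter) : H := MonoidAlgebra.single w 1

/-- The generator `x`. -/
noncomputable def X : H := word (FreeMonoid.of Letter.x)

/-- The generator `y`. -/
noncomputable def Y : H := word (FreeMonoid.of Letter.y)

/-- The word `z_k = x^{k-1} y` (for `k ≥ 1`). -/
def zW (k : ℕ) : FreeMonoid Letter :=
  FreeMonoid.ofList (List.replicate (k - 1) Letter.x ++ [Letter.y])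

/-- `z_k = x^{k-1} y` as an element of `H`. -/
noncomputable def z (k : ℕ) : H := word (zW k)

/-- A list `[k₁,…,kₙ]` gives the word `z_{k₁} z_{k₂} ⋯ z_{kₙ}`. -/
def zListW (ks : List ℕ) : FreeMonoid Letter :=
  FreeMonoid.ofList (ks.flatMap fun k => List.replicate (k - 1) Letter.x ++ [Letter.y])

/-- `H¹ = ℚ + Hy` as a ℚ-submodule of `H`. -/
noncomputable def H1 : Submodule ℚ H :=
  LinearMap.range (LinearMap.mulRight ℚ Y) ⊔ Submodule.span ℚ {1}

/-- `H⁰ = ℚ + xHy` as a ℚ-submodule of `H`. -/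
noncomputable def H0 : Submodule ℚ H :=
  LinearMap.range ((LinearMap.mulRight ℚ Y).comp (LinearMap.mulLeft ℚ X)) ⊔
    Submodule.span ℚ {1}

/-- Parse a word of `H¹` into the exponent list of its `z`-decomposition:
`z_{k₁}⋯z_{kₙ} ↦ [k₁,…,kₙ]` (auxiliary accumulator version). -/
def toZAux : List Letter → ℕ → List ℕ
  | [], _ => []
  | Letter.x :: r, n => toZAux r (n + 1)
  | Letter.y :: r, n => (n + 1) :: toZAux r 0

/-- The `z`-decomposition of a word of `H¹`. -/
def toZ (w : FreeMonoid Letter) : List ℕ := toZAux (FreeMonoid.toList w) 0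

/-- The harmonic product on words of `H¹` (via `z`-decompositions):
`1 * w = w * 1 = w` and
`z_k w₁ * z_l w₂ = z_k (w₁ * z_l w₂) + z_l (z_k w₁ * w₂) + z_{k+l} (w₁ * w₂)`. -/
noncomputable def harmW : List ℕ → List ℕ → H
  | [], w => word (zListW w)
  | k :: w1, [] => word (zListW (k :: w1))
  | k :: w1, l :: w2 =>
      z k * harmW w1 (l :: w2) + z l * harmW (k :: w1) w2 + z (k + l) * harmW w1 w2
termination_by w1 w2 => w1.length + w2.length
decreasing_by all_goals simp [Nat.lt_succ_iff] <;> omega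

/-- The n-harmonic product on words of `H¹`:
`1 *̄ w = w *̄ 1 = w` and
`z_k w₁ *̄ z_l w₂ = z_k (w₁ *̄ z_l w₂) + z_l (z_k w₁ *̄ w₂) − z_{k+l} (w₁ *̄ w₂)`. -/
noncomputable def nharmW : List ℕ → List ℕ → H
  | [], w => word (zListW w)
  | k :: w1, [] => word (zListW (k :: w1))
  | k :: w1, l :: w2 =>
      z k * nharmW w1 (l :: w2) + z l * nharmW (k :: w1) w2 - z (k + l) * nharmW w1 w2
termination_by w1 w2 => w1.length + w2.length
decreasing_by all_goals simp [Nat.lt_succ_iff] <;> omega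

/-- The harmonic product `*` on `H¹`, extended ℚ-bilinearly. -/
noncomputable def harm (a b : H) : H :=
  Finsupp.sum a.coeff fun w1 c1 =>
    Finsupp.sum b.coeff fun w2 c2 => (c1 * c2) • harmW (toZ w1) (toZ w2)

/-- The n-harmonic product `*̄` on `H¹`, extended ℚ-bilinearly. -/
noncomputable def nharm (a b : H) : H :=
  Finsupp.sum a.coeff fun w1 c1 =>
    Finsupp.sum b.coeff fun w2 c2 => (c1 * c2) • nharmW (toZ w1) (toZ w2)

/-- The letter exchange `τ(x) = y`, `τ(y) = x`. -/
def τ : Letter → Letter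
  | Letter.x => Letter.y
  | Letter.y => Letter.x

/-- `δ(w) = 1` if `w` is the empty word, `0` otherwise. -/
def δ : List Letter → ℚ
  | [] => 1
  | _ :: _ => 0

/-- The shuffle product on words:
`1 ш w = w ш 1 = w` and `u₁w₁ ш u₂w₂ = u₁(w₁ ш u₂w₂) + u₂(u₁w₁ ш w₂)`. -/
noncomputable def shW : List Letter → List Letter → H
  | [], w => word (FreeMonoid.ofList w)
  | u :: w, [] => word (FreeMonoid.ofList (u :: w))
  | u1 :: w1, u2 :: w2 =>
      word (FreeMonoid.of u1) * shW w1 (u2 :: w2) +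
        word (FreeMonoid.of u2) * shW (u1 :: w1) w2
termination_by w1 w2 => w1.length + w2.length
decreasing_by all_goals simp [Nat.lt_succ_iff]

/-- The n-shuffle product on words: `1 ш̄ w = w ш̄ 1 = w` and
`u₁w₁ ш̄ u₂w₂ = u₁(w₁ ш̄ u₂w₂) + u₂(u₁w₁ ш̄ w₂) − δ(w₁)τ(u₁)u₂w₂ − δ(w₂)τ(u₂)u₁w₁`. -/
noncomputable def nshW : List Letter → List Letter → H
  | [], w => word (FreeMonoid.ofList w)
  | u :: w, [] => word (FreeMonoid.ofList (u :: w))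
  | u1 :: w1, u2 :: w2 =>
      word (FreeMonoid.of u1) * nshW w1 (u2 :: w2) +
        word (FreeMonoid.of u2) * nshW (u1 :: w1) w2 -
        δ w1 • word (FreeMonoid.ofList (τ u1 :: u2 :: w2)) -
        δ w2 • word (FreeMonoid.ofList (τ u2 :: u1 :: w1))
termination_by w1 w2 => w1.length + w2.length
decreasing_by all_goals simp [Nat.lt_succ_iff]

/-- The shuffle product `ш` on `H`, extended ℚ-bilinearly. -/
noncomputable def sh (a b : H) : H :=
  Finsupp.sum a.coeff fun w1 c1 =>
    Finsupp.sum b.coeff fun w2 c2 =>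
      (c1 * c2) • shW (FreeMonoid.toList w1) (FreeMonoid.toList w2)

/-- The n-shuffle product `ш̄` on `H`, extended ℚ-bilinearly. -/
noncomputable def nsh (a b : H) : H :=
  Finsupp.sum a.coeff fun w1 c1 =>
    Finsupp.sum b.coeff fun w2 c2 =>
      (c1 * c2) • nshW (FreeMonoid.toList w1) (FreeMonoid.toList w2)

/-- `S₁`: the ℚ-algebra endomorphism of `H` with `S₁(x) = x`, `S₁(y) = x + y`. -/
noncomputable def S1 : H →ₐ[ℚ] H :=
  MonoidAlgebra.lift ℚ H (FreeMonoid Letter)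
    (FreeMonoid.lift fun u => match u with
      | Letter.x => X
      | Letter.y => X + Y)

/-- `S₂`: the ℚ-algebra endomorphism of `H` with `S₂(x) = x`, `S₂(y) = y − x`. -/
noncomputable def S2 : H →ₐ[ℚ] H :=
  MonoidAlgebra.lift ℚ H (FreeMonoid Letter)
    (FreeMonoid.lift fun u => match u with
      | Letter.x => X
      | Letter.y => Y - X)

/-- `S` on a word: `S(1) = 1` and `S(Fy) = S₁(F)y`. -/
noncomputable def SW (w : FreeMonoid Letter) : H :=
  match (FreeMonoid.toList w).getLast? with
  | some Letter.y =>
      S1 (word (FreeMonoid.ofList (FreeMonoid.toList w).dropLast)) * Y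
  | _ => word w

/-- The ℚ-linear map `S : H¹ → H¹` with `S(1) = 1`, `S(Fy) = S₁(F)y`. -/
noncomputable def S (a : H) : H := Finsupp.sum a.coeff fun w c => c • SW w

/-- `S̃` on a word: `S̃(1) = 1` and `S̃(Fy) = S₂(F)y`. -/
noncomputable def StW (w : FreeMonoid Letter) : H :=
  match (FreeMonoid.toList w).getLast? with
  | some Letter.y =>
      S2 (word (FreeMonoid.ofList (FreeMonoid.toList w).dropLast)) * Y
  | _ => word w

/-- The ℚ-linear map `S̃ : H¹ → H¹` with `S̃(1) = 1`, `S̃(Fy) = S₂(F)y`. -/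
noncomputable def St (a : H) : H := Finsupp.sum a.coeff fun w c => c • StW w

/-- The multiple zeta value `ζ(k₁,…,kₙ)`: the sum over strictly decreasing
tuples `m₁ > m₂ > ⋯ > mₙ > 0` of `1/(m₁^{k₁}⋯mₙ^{kₙ})`. -/
noncomputable def mzeta (ks : List ℕ) : ℝ :=
  ∑' m : {f : Fin ks.length → ℕ // (∀ i, 0 < f i) ∧
      ∀ i j : Fin ks.length, i < j → f j < f i},
    ∏ i : Fin ks.length, ((m.1 i : ℝ) ^ ks.get i)⁻¹

/-- The non-strict multiple zeta value `ζ̄(k₁,…,kₙ)`: the sum over weakly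
decreasing tuples `m₁ ≥ m₂ ≥ ⋯ ≥ mₙ > 0` of `1/(m₁^{k₁}⋯mₙ^{kₙ})`. -/
noncomputable def nmzeta (ks : List ℕ) : ℝ :=
  ∑' m : {f : Fin ks.length → ℕ // (∀ i, 0 < f i) ∧
      ∀ i j : Fin ks.length, i ≤ j → f j ≤ f i},
    ∏ i : Fin ks.length, ((m.1 i : ℝ) ^ ks.get i)⁻¹

/-- The evaluation map `Z : H⁰ → ℝ`, `Z(1) = 1`,
`Z(z_{k₁}⋯z_{kₙ}) = ζ(k₁,…,kₙ)` (extended ℚ-linearly to `H`). -/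
noncomputable def Z (a : H) : ℝ := Finsupp.sum a.coeff fun w c => (c : ℝ) * mzeta (toZ w)

/-- The n-evaluation map `Z̄ : H⁰ → ℝ`, `Z̄(1) = 1`,
`Z̄(z_{k₁}⋯z_{kₙ}) = ζ̄(k₁,…,kₙ)` (extended ℚ-linearly to `H`). -/
noncomputable def Zbar (a : H) : ℝ := Finsupp.sum a.coeff fun w c => (c : ℝ) * nmzeta (toZ w)

/-- `i`-fold n-harmonic power: `a^{*̄ 0} = 1`, `a^{*̄ (i+1)} = a *̄ a^{*̄ i}`. -/
noncomputable def nharmPow : ℕ → H → H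
  | 0, _ => 1
  | i + 1, a => nharm a (nharmPow i a)

/-- `i`-fold n-shuffle power: `a^{ш̄ 0} = 1`, `a^{ш̄ (i+1)} = a ш̄ a^{ш̄ i}`. -/
noncomputable def nshPow : ℕ → H → H
  | 0, _ => 1
  | i + 1, a => nsh a (nshPow i a)

end H

open H

namespace NshProof

/-- Number of leading `y`s of a word. -/
def lead : List Letter → ℕ
  | Letter.y :: l => lead l + 1
  | _ => 0

/-- The word is empty or ends in `y`. -/
def EndY : List Letter → Prop
  | [] => True
  | u :: l => EndY l ∧ (l = [] → u = Letter.y)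

/-- The word attached to a list. -/
noncomputable def wd (l : List Letter) : H := word (FreeMonoid.ofList l)

/-- Span of words of `H¹` with fewer than `m` leading `y`s. -/
noncomputable def F (m : ℕ) : Submodule ℚ H :=
  Submodule.span ℚ {a | ∃ l, EndY l ∧ lead l < m ∧ a = wd l}

/-- Span of nonempty words of `H¹`. -/
noncomputable def K : Submodule ℚ H :=
  Submodule.span ℚ {a | ∃ l, EndY l ∧ l ≠ [] ∧ a = wd l}

lemma wd_mem_F {m : ℕ} {l : List Letter} (h1 : EndY l) (h2 : lead l < m) : wd l ∈ F m :=
  Submodule.subset_span ⟨l, h1, h2, rfl⟩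

lemma wd_mem_K {l : List Letter} (h1 : EndY l) (h2 : l ≠ []) : wd l ∈ K :=
  Submodule.subset_span ⟨l, h1, h2, rfl⟩

lemma F_mono {m n : ℕ} (h : m ≤ n) : F m ≤ F n := by
  apply Submodule.span_mono
  rintro a ⟨l, h1, h2, rfl⟩
  exact ⟨l, h1, by omega, rfl⟩

lemma wd_mul (a b : List Letter) : wd a * wd b = wd (a ++ b) := by
  simp [wd, word, MonoidAlgebra.single_mul_single, ← FreeMonoid.ofList_append]

lemma of_mul_wd (u : Letter) (b : List Letter) : word (FreeMonoid.of u) * wd b = wd (u :: b) :=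
  wd_mul [u] b

lemma mul_mem {S T : Submodule ℚ H} {P : List Letter → Prop} (c : H)
    (hS : S = Submodule.span ℚ {a | ∃ l, P l ∧ a = wd l})
    (h : ∀ l, P l → c * wd l ∈ T) {a : H} (ha : a ∈ S) : c * a ∈ T := by
  subst hS
  induction ha using Submodule.span_induction with
  | mem x hx => obtain ⟨l, hl, rfl⟩ := hx; exact h l hl
  | zero => simp
  | add x y _ _ hx hy => rw [mul_add]; exact T.add_mem hx hy
  | smul q x _ hx => rw [mul_smul_comm]; exact T.smul_mem _ hx

lemma of_mul_K (u : Letter) {a : H} (ha : a ∈ K) : word (FreeMonoid.of u) * a ∈ K := by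
  refine mul_mem (P := fun l => EndY l ∧ l ≠ []) _ (by simp only [K, and_assoc]) ?_ ha
  rintro l ⟨h1, h2⟩
  rw [of_mul_wd]
  exact wd_mem_K ⟨h1, fun h => absurd h h2⟩ (by simp)

lemma x_mul_K {m : ℕ} {a : H} (ha : a ∈ K) : word (FreeMonoid.of Letter.x) * a ∈ F (m + 1) := by
  refine mul_mem (P := fun l => EndY l ∧ l ≠ []) _ (by simp only [K, and_assoc]) ?_ ha
  rintro l ⟨h1, h2⟩
  rw [of_mul_wd]
  exact wd_mem_F ⟨h1, fun h => absurd h h2⟩ (by simp [lead])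

lemma y_mul_F {m : ℕ} {a : H} (ha : a ∈ F m) : word (FreeMonoid.of Letter.y) * a ∈ F (m + 1) := by
  refine mul_mem (P := fun l => EndY l ∧ lead l < m) _ (by simp only [F, and_assoc]) ?_ ha
  rintro l ⟨h1, h2⟩
  rw [of_mul_wd]
  exact wd_mem_F ⟨h1, fun _ => rfl⟩ (by simp [lead]; omega)

lemma nshW_nil_left (w : List Letter) : nshW [] w = wd w := by rw [nshW]; rfl

lemma nshW_nil_right (w : List Letter) : nshW w [] = wd w := by cases w <;> rw [nshW] <;> rfl

lemma nshW_cons (u1 u2 : Letter) (w1 w2 : List Letter) :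
    nshW (u1 :: w1) (u2 :: w2) = word (FreeMonoid.of u1) * nshW w1 (u2 :: w2) +
        word (FreeMonoid.of u2) * nshW (u1 :: w1) w2 -
        δ w1 • wd (τ u1 :: u2 :: w2) - δ w2 • wd (τ u2 :: u1 :: w1) := by
  rw [nshW]; rfl

lemma nshW_mem_K : ∀ (n : ℕ) (a b : List Letter), a.length + b.length = n → EndY a → EndY b →
    (a ≠ [] ∨ b ≠ []) → nshW a b ∈ K
  | n, [], b, _, _, hb, h => by
      rw [nshW_nil_left]; exact wd_mem_K hb (by simpa using h)
  | n, a, [], _, ha, _, h => by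
      rw [nshW_nil_right]; exact wd_mem_K ha (by simpa using h)
  | n, u1 :: w1, u2 :: w2, hn, ha, hb, _ => by
      simp only [List.length_cons] at hn
      rw [nshW_cons]
      refine K.sub_mem (K.sub_mem (K.add_mem (of_mul_K _ ?_) (of_mul_K _ ?_))
        (K.smul_mem _ ?_)) (K.smul_mem _ ?_)
      · exact nshW_mem_K (n - 1) w1 (u2 :: w2) (by simp; omega) ha.1 hb (by simp)
      · exact nshW_mem_K (n - 1) (u1 :: w1) w2 (by simp; omega) ha hb.1 (by simp)
      · exact wd_mem_K ⟨hb, by simp⟩ (by simp)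
      · exact wd_mem_K ⟨ha, by simp⟩ (by simp)
termination_by _ a b => a.length + b.length
decreasing_by all_goals simp only [List.length_cons]; omega

lemma corr_mem {u u' : Letter} {w w' : List Letter} {m : ℕ} (h : EndY (u :: w))
    (h' : EndY (u' :: w')) : δ w • wd (τ u :: u' :: w') ∈ F (m + 1) := by
  cases w with
  | nil =>
    have hu : u = Letter.y := h.2 rfl
    subst hu
    exact (F _).smul_mem _ (wd_mem_F ⟨h', by simp⟩ (by simp [τ, lead]))
  | cons _ _ => simp [δ]

lemma nshW_mem_F : ∀ (n : ℕ) (a b : List Letter), a.length + b.length = n → EndY a → EndY b →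
    nshW a b ∈ F (lead a + lead b + 1)
  | n, [], b, _, _, hb => by
      rw [nshW_nil_left]; exact wd_mem_F hb (by omega)
  | n, a, [], _, ha, _ => by
      rw [nshW_nil_right]; exact wd_mem_F ha (by omega)
  | n, u1 :: w1, u2 :: w2, hn, ha, hb => by
      simp only [List.length_cons] at hn
      rw [nshW_cons]
      refine (F _).sub_mem ((F _).sub_mem ((F _).add_mem ?_ ?_) (corr_mem ha hb)) (corr_mem hb ha)
      · cases u1 with
        | x => exact x_mul_K (nshW_mem_K _ _ _ rfl ha.1 hb (by simp))
        | y =>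
          refine F_mono ?_ (y_mul_F
            (nshW_mem_F (n - 1) w1 (u2 :: w2) (by simp; omega) ha.1 hb))
          simp only [lead]; omega
      · cases u2 with
        | x => exact x_mul_K (nshW_mem_K _ _ _ rfl ha hb.1 (by simp))
        | y =>
          refine F_mono ?_ (y_mul_F
            (nshW_mem_F (n - 1) (u1 :: w1) w2 (by simp; omega) ha hb.1))
          simp only [lead]; omega
termination_by _ a b => a.length + b.length
decreasing_by all_goals simp only [List.length_cons]; omega

/-- The word `y^k`. -/
abbrev ys (k : ℕ) : List Letter := List.replicate k Letter.y

lemma endY_ys (k : ℕ) {w : List Letter} (hw : EndY w) : EndY (ys k ++ w) := by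
  induction k with
  | zero => simpa using hw
  | succ k ih => exact ⟨ih, fun _ => rfl⟩

lemma endY_ys' (k : ℕ) : EndY (ys k) := by
  simpa using endY_ys k (w := []) trivial

lemma lead_ys (k : ℕ) (w : List Letter) : lead (ys k ++ w) = k + lead w := by
  induction k with
  | zero => simp
  | succ k ih => simp only [ys, List.replicate_succ, List.cons_append, lead] at *; omega

lemma lead_ys' (k : ℕ) : lead (ys k) = k := by
  simpa [lead] using lead_ys k []

lemma nshW_ys (w : List Letter) (hw : EndY w) (h0 : lead w = 0) (k : ℕ) :
    nshW w (ys k) - wd (ys k ++ w) ∈ F k := by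
  induction k with
  | zero => simp [nshW_nil_right]
  | succ k ih =>
    cases w with
    | nil => simp [nshW_nil_left]
    | cons u v =>
      cases u with
      | y => simp [lead] at h0
      | x =>
        have hb : EndY (Letter.y :: ys k) := endY_ys' (k + 1)
        have e : nshW (Letter.x :: v) (ys (k + 1)) - wd (ys (k + 1) ++ Letter.x :: v) =
            word (FreeMonoid.of Letter.x) * nshW v (Letter.y :: ys k) +
            word (FreeMonoid.of Letter.y) * (nshW (Letter.x :: v) (ys k) -
              wd (ys k ++ Letter.x :: v)) -
            δ v • wd (τ Letter.x :: Letter.y :: ys k) -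
            δ (ys k) • wd (τ Letter.y :: Letter.x :: v) := by
          rw [mul_sub, of_mul_wd]
          simp only [ys, List.replicate_succ, nshW_cons, List.cons_append]
          abel
        rw [e]
        refine (F _).sub_mem ((F _).sub_mem ((F _).add_mem ?_ (y_mul_F ih))
          (corr_mem hw hb)) (corr_mem hb hw)
        exact x_mul_K (nshW_mem_K _ _ _ rfl hw.1 hb (by simp))

lemma nshW_y_ys (k : ℕ) :
    nshW [Letter.y] (ys k) - ((k : ℚ) + 1) • wd (ys (k + 1)) ∈ F (k + 1) := by
  induction k with
  | zero => simp [nshW_nil_right]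
  | succ k ih =>
    have hb : EndY (Letter.y :: ys k) := endY_ys' (k + 1)
    have ha : EndY [Letter.y] := endY_ys' 1
    have e : nshW [Letter.y] (ys (k + 1)) - (((k + 1 : ℕ) : ℚ) + 1) • wd (ys (k + 1 + 1)) =
        word (FreeMonoid.of Letter.y) * (nshW [Letter.y] (ys k)
          - ((k : ℚ) + 1) • wd (ys (k + 1))) -
        δ [] • wd (τ Letter.y :: Letter.y :: ys k) -
        δ (ys k) • wd (τ Letter.y :: [Letter.y]) := by
      rw [mul_sub, mul_smul_comm, of_mul_wd]
      simp only [ys, List.replicate_succ, nshW_cons, nshW_nil_left, of_mul_wd]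
      push_cast
      module
    rw [e]
    exact (F _).sub_mem ((F _).sub_mem (y_mul_F ih) (corr_mem ha hb)) (corr_mem hb ha)

lemma nsh_add_left (a a' b : H) : nsh (a + a') b = nsh a b + nsh a' b := by
  unfold nsh
  rw [MonoidAlgebra.coeff_add, Finsupp.sum_add_index']
  · intro w; simp
  · intro w p q; simp only [add_mul, add_smul]; exact Finsupp.sum_add

lemma nsh_add_right (a b b' : H) : nsh a (b + b') = nsh a b + nsh a b' := by
  unfold nsh
  rw [← Finsupp.sum_add]
  refine Finsupp.sum_congr fun w _ => ?_
  rw [MonoidAlgebra.coeff_add, Finsupp.sum_add_index']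
  · intro w; simp
  · intro w p q; simp only [mul_add, add_smul]

lemma nsh_smul_left (r : ℚ) (a b : H) : nsh (r • a) b = r • nsh a b := by
  unfold nsh
  rw [MonoidAlgebra.coeff_smul, Finsupp.sum_smul_index' (by intro w; simp), Finsupp.smul_sum]
  refine Finsupp.sum_congr fun w _ => ?_
  rw [Finsupp.smul_sum]
  refine Finsupp.sum_congr fun w _ => ?_
  rw [smul_smul, smul_eq_mul, mul_assoc]

lemma nsh_smul_right (r : ℚ) (a b : H) : nsh a (r • b) = r • nsh a b := by
  unfold nsh
  rw [Finsupp.smul_sum]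
  refine Finsupp.sum_congr fun w _ => ?_
  rw [MonoidAlgebra.coeff_smul, Finsupp.sum_smul_index' (by intro w; simp), Finsupp.smul_sum]
  refine Finsupp.sum_congr fun w _ => ?_
  rw [smul_smul, smul_eq_mul]
  congr 1; ring

/-- The n-shuffle product as a bilinear map. -/
noncomputable def nshL : H →ₗ[ℚ] H →ₗ[ℚ] H :=
  LinearMap.mk₂ ℚ nsh nsh_add_left nsh_smul_left nsh_add_right nsh_smul_right

lemma nshL_apply (a b : H) : nshL a b = nsh a b := rfl

lemma nsh_wd (a b : List Letter) : nsh (wd a) (wd b) = nshW a b := by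
  simp [nsh, wd, word, MonoidAlgebra.coeff_single, Finsupp.sum_single_index]

lemma nsh_mem {i j k : ℕ} (hk : i + j ≤ k + 1) {a b : H} (ha : a ∈ F i) (hb : b ∈ F j) :
    nsh a b ∈ F k := by
  rw [← nshL_apply]
  induction ha using Submodule.span_induction with
  | zero => simp
  | add x y _ _ hx hy => rw [map_add]; exact (F _).add_mem hx hy
  | smul q x _ hx => rw [map_smul]; exact (F _).smul_mem _ hx
  | mem x hx =>
    obtain ⟨l, h1, h2, rfl⟩ := hx
    induction hb using Submodule.span_induction with
    | zero => simp
    | add x y _ _ hx hy => rw [map_add]; exact (F _).add_mem hx hy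
    | smul q x _ hx => rw [map_smul]; exact (F _).smul_mem _ hx
    | mem x hx =>
      obtain ⟨l', h1', h2', rfl⟩ := hx
      rw [nshL_apply, nsh_wd]
      exact F_mono (by omega) (nshW_mem_F _ _ _ rfl h1 h1')

lemma nsh_ys {c : H} (hc : c ∈ F 1) (k : ℕ) : nsh c (wd (ys k)) - wd (ys k) * c ∈ F k := by
  rw [← nshL_apply]
  induction hc using Submodule.span_induction with
  | zero => simp
  | add x y _ _ hx hy =>
    rw [map_add, mul_add, LinearMap.add_apply, add_sub_add_comm]; exact (F _).add_mem hx hy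
  | smul q x _ hx =>
    rw [map_smul, mul_smul_comm, LinearMap.smul_apply, ← smul_sub]; exact (F _).smul_mem _ hx
  | mem x hx =>
    obtain ⟨l, h1, h2, rfl⟩ := hx
    rw [nshL_apply, nsh_wd, wd_mul]
    exact nshW_ys l h1 (by omega) k

lemma Y_eq : Y = wd [Letter.y] := rfl

lemma pow_sub (k : ℕ) : nshPow k Y - (k.factorial : ℚ) • wd (ys k) ∈ F k := by
  induction k with
  | zero =>
    have : (1 : H) = wd [] := rfl
    simp [nshPow, this]
  | succ k ih =>
    have e : nshPow (k + 1) Y - ((k + 1).factorial : ℚ) • wd (ys (k + 1)) =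
        nsh Y (nshPow k Y - (k.factorial : ℚ) • wd (ys k)) +
        (k.factorial : ℚ) • (nshW [Letter.y] (ys k) - ((k : ℚ) + 1) • wd (ys (k + 1))) := by
      rw [← nshL_apply, map_sub, map_smul, nshL_apply, nshL_apply, Y_eq, nsh_wd, nshPow,
        Nat.factorial_succ]
      push_cast
      module
    rw [e]
    refine (F _).add_mem (nsh_mem (i := 2) (j := k) (by omega) ?_ ih)
      ((F _).smul_mem _ (nshW_y_ys k))
    rw [Y_eq]
    exact wd_mem_F (endY_ys' 1) (by simp [lead])

lemma main_lead {c : H} (hc : c ∈ F 1) (k : ℕ) :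
    nsh c (nshPow k Y) - (k.factorial : ℚ) • (wd (ys k) * c) ∈ F k := by
  have e : nsh c (nshPow k Y) - (k.factorial : ℚ) • (wd (ys k) * c) =
      nsh c (nshPow k Y - (k.factorial : ℚ) • wd (ys k)) +
      (k.factorial : ℚ) • (nsh c (wd (ys k)) - wd (ys k) * c) := by
    rw [← nshL_apply, ← nshL_apply, ← nshL_apply, map_sub, map_smul]
    module
  rw [e]
  exact (F _).add_mem (nsh_mem (by omega) hc (pow_sub k)) ((F _).smul_mem _ (nsh_ys hc k))

lemma exists_split (l : List Letter) : ∃ r, l = ys (lead l) ++ r ∧ lead r = 0 := by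
  induction l with
  | nil => exact ⟨[], rfl, rfl⟩
  | cons u l ih =>
    cases u with
    | x => exact ⟨Letter.x :: l, rfl, rfl⟩
    | y =>
      obtain ⟨r, h1, h2⟩ := ih
      refine ⟨r, ?_, h2⟩
      simp only [lead, ys, List.replicate_succ, List.cons_append]
      exact congrArg _ h1

lemma endY_of_append (a b : List Letter) (h : EndY (a ++ b)) : EndY b := by
  induction a with
  | nil => exact h
  | cons u a ih => exact ih h.1

lemma split_F {m : ℕ} {f : H} (hf : f ∈ F (m + 1)) :
    ∃ g ∈ F 1, f - wd (ys m) * g ∈ F m := by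
  induction hf using Submodule.span_induction with
  | zero => exact ⟨0, by simp, by simp⟩
  | add x y _ _ hx hy =>
    obtain ⟨g, hg, h⟩ := hx
    obtain ⟨g', hg', h'⟩ := hy
    refine ⟨g + g', (F _).add_mem hg hg', ?_⟩
    rw [mul_add, add_sub_add_comm]
    exact (F _).add_mem h h'
  | smul q x _ hx =>
    obtain ⟨g, hg, h⟩ := hx
    refine ⟨q • g, (F _).smul_mem _ hg, ?_⟩
    rw [mul_smul_comm, ← smul_sub]
    exact (F _).smul_mem _ h
  | mem x hx =>
    obtain ⟨l, h1, h2, rfl⟩ := hx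
    rcases Nat.lt_or_ge (lead l) m with h | h
    · exact ⟨0, by simp, by simpa using wd_mem_F h1 h⟩
    · have hm : lead l = m := by omega
      obtain ⟨r, hr, hr0⟩ := exists_split l
      rw [hm] at hr
      subst hr
      refine ⟨wd r, wd_mem_F (endY_of_append _ _ h1) (by omega), ?_⟩
      rw [wd_mul, sub_self]
      exact (F _).zero_mem

lemma F_zero {f : H} (hf : f ∈ F 0) : f = 0 := by
  simpa [F] using hf

lemma exists_rep (m : ℕ) : ∀ f ∈ F m, ∃ c : ℕ → H, (∀ i, c i ∈ F 1) ∧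
    f = ∑ i ∈ Finset.range m, nsh (c i) (nshPow i Y) := by
  induction m with
  | zero => intro f hf; exact ⟨0, fun i => (F 1).zero_mem, by simp [F_zero hf]⟩
  | succ m ih =>
    intro f hf
    obtain ⟨g, hg, h⟩ := split_F hf
    have hne : (m.factorial : ℚ) ≠ 0 := by exact_mod_cast m.factorial_ne_zero
    set g' : H := (m.factorial : ℚ)⁻¹ • g with hg'
    have hgm : g' ∈ F 1 := (F _).smul_mem _ hg
    have h2 := main_lead hgm m
    have e : (m.factorial : ℚ) • (wd (ys m) * g') = wd (ys m) * g := by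
      rw [hg', mul_smul_comm, smul_smul, mul_inv_cancel₀ hne, one_smul]
    rw [e] at h2
    obtain ⟨c, hc, hs⟩ := ih _ ((F _).sub_mem h h2)
    refine ⟨fun i => if i = m then g' else c i, ?_, ?_⟩
    · intro i; dsimp only; split_ifs
      · exact hgm
      · exact hc i
    · rw [Finset.sum_range_succ, Finset.sum_congr rfl (g := fun i => nsh (c i) (nshPow i Y))]
      · rw [← hs]; simp
      · intro i hi
        simp only [if_neg (Finset.mem_range.1 hi).ne]

lemma coeff_F {m : ℕ} {f : H} (hf : f ∈ F m) (l : List Letter) (hl : m ≤ lead l) :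
    f.coeff (FreeMonoid.ofList l) = 0 := by
  induction hf using Submodule.span_induction with
  | zero => simp
  | add x y _ _ hx hy => simp [hx, hy]
  | smul q x _ hx => simp [hx]
  | mem x hx =>
    obtain ⟨l', h1, h2, rfl⟩ := hx
    rw [wd, word, MonoidAlgebra.coeff_single, Finsupp.single_eq_of_ne]
    intro h
    have := FreeMonoid.ofList.injective h
    subst this
    omega

lemma eq_zero_of {m : ℕ} {c : H} (h : wd (ys m) * c ∈ F m) : c = 0 := by
  rw [← MonoidAlgebra.coeff_eq_zero]
  ext l
  have h1 := coeff_F h (ys m ++ FreeMonoid.toList l) (by rw [lead_ys]; omega)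
  rw [wd, word, MonoidAlgebra.coeff_single_mul_eq_mul_coeff l, one_mul] at h1
  · simpa using h1
  · intro l' _
    rw [FreeMonoid.ofList_append, FreeMonoid.ofList_toList]
    exact mul_right_inj _

lemma unique_rep (m : ℕ) : ∀ c : ℕ → H, (∀ i, c i ∈ F 1) →
    ∑ i ∈ Finset.range m, nsh (c i) (nshPow i Y) ∈ F m ∧
    (∑ i ∈ Finset.range m, nsh (c i) (nshPow i Y) = 0 → ∀ i < m, c i = 0) := by
  induction m with
  | zero => intro c hc; simp
  | succ m ih =>
    intro c hc
    obtain ⟨h1, h2⟩ := ih c hc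
    have h3 := main_lead (hc m) m
    constructor
    · rw [Finset.sum_range_succ]
      refine (F _).add_mem (F_mono (Nat.le_succ m) h1) (nsh_mem (i := 1) (j := m + 1) (by omega) (hc m) ?_)
      have := (F (m + 1)).add_mem (F_mono (Nat.le_succ m) (pow_sub m))
        ((F (m + 1)).smul_mem (m.factorial : ℚ)
          (wd_mem_F (endY_ys' m) (by rw [lead_ys']; omega)))
      simpa using this
    · intro hs
      rw [Finset.sum_range_succ] at hs
      have hne : (m.factorial : ℚ) ≠ 0 := by exact_mod_cast m.factorial_ne_zero
      have h4 : (m.factorial : ℚ) • (wd (ys m) * c m) ∈ F m := by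
        have := (F m).add_mem h3 h1
        have := (F m).neg_mem this
        have e : -(nsh (c m) (nshPow m Y) - (m.factorial : ℚ) • (wd (ys m) * c m) +
            ∑ i ∈ Finset.range m, nsh (c i) (nshPow i Y)) =
            (m.factorial : ℚ) • (wd (ys m) * c m) -
            (∑ i ∈ Finset.range m, nsh (c i) (nshPow i Y) + nsh (c m) (nshPow m Y)) := by abel
        rwa [e, hs, sub_zero] at this
      have h5 : c m = 0 := eq_zero_of (((F m).smul_mem_iff hne).1 h4)
      rw [h5, ← nshL_apply, map_zero, LinearMap.zero_apply, add_zero] at hs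
      intro i hi
      rcases Nat.lt_succ_iff_lt_or_eq.1 hi with h | h
      · exact h2 hs i h
      · rw [h, h5]

lemma endY_append_y (l : List Letter) : EndY (l ++ [Letter.y]) := by
  induction l with
  | nil => exact ⟨trivial, fun _ => rfl⟩
  | cons u l ih => exact ⟨ih, by simp⟩

lemma exists_append_y (l : List Letter) (h : EndY l) (h' : l ≠ []) :
    ∃ r, l = r ++ [Letter.y] := by
  induction l with
  | nil => exact absurd rfl h'
  | cons u l ih =>
    by_cases hl : l = []
    · subst hl
      exact ⟨[], by rw [h.2 rfl]; rfl⟩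
    · obtain ⟨r, rfl⟩ := ih h.1 hl
      exact ⟨u :: r, rfl⟩

lemma H0_eq : H0 = F 1 := by
  apply le_antisymm
  · refine sup_le ?_ ?_
    · rintro _ ⟨a, rfl⟩
      induction a using MonoidAlgebra.induction_linear with
      | zero => simp
      | add a b ha hb => rw [map_add]; exact (F 1).add_mem ha hb
      | single l q =>
        have : MonoidAlgebra.single l q = q • wd (FreeMonoid.toList l) := by
          simp [wd, word]
        rw [this, map_smul]
        refine (F 1).smul_mem _ ?_
        have e : ((LinearMap.mulRight ℚ Y).comp (LinearMap.mulLeft ℚ X))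
            (wd (FreeMonoid.toList l)) = wd (Letter.x :: (FreeMonoid.toList l ++ [Letter.y])) := by
          change wd [Letter.x] * wd _ * wd [Letter.y] = _
          rw [wd_mul, wd_mul]; rfl
        rw [e]
        exact wd_mem_F ⟨endY_append_y _, by simp⟩ (by simp [lead])
    · rw [Submodule.span_le, Set.singleton_subset_iff]
      exact wd_mem_F (l := []) trivial (by simp [lead])
  · refine Submodule.span_le.2 ?_
    rintro _ ⟨l, h1, h2, rfl⟩
    cases l with
    | nil => exact Submodule.mem_sup_right (Submodule.subset_span rfl)
    | cons u l =>
      cases u with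
      | y => simp [lead] at h2
      | x =>
        have hl : l ≠ [] := fun h => by simpa using h1.2 h
        obtain ⟨r, rfl⟩ := exists_append_y l h1.1 hl
        refine Submodule.mem_sup_left ⟨wd r, ?_⟩
        change wd [Letter.x] * wd r * wd [Letter.y] = _
        rw [wd_mul, wd_mul]; rfl

end NshProof

open NshProof

/-- Every element `yᵐ w` of `H¹` (`m ≥ 0`, `w` a word of `H⁰`) has a unique
representation `yᵐ w = w₀ + w₁ ш̄ y + ⋯ + wₘ ш̄ y^{ш̄ m}` with all `wᵢ ∈ H⁰`;
consequently `(H¹, ш̄) ≃ (H⁰, ш̄)[y]`. -/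
theorem nsh_polynomial_representation (m : ℕ) (w : FreeMonoid Letter)
    (hw : word w ∈ H0) :
    ∃! c : Fin (m + 1) → H,
      (∀ i, c i ∈ H0) ∧
      word (FreeMonoid.ofList (List.replicate m Letter.y) * w) =
        ∑ i : Fin (m + 1), nsh (c i) (nshPow i.1 Y) := by
  rw [H0_eq] at hw ⊢
  have hmem : word (FreeMonoid.ofList (List.replicate m Letter.y) * w) ∈ F (m + 1) := by
    have h1 := nsh_mem (i := 1) (j := m + 1) (k := m + 1) (by omega) hw
      (wd_mem_F (endY_ys' m) (by rw [lead_ys']; omega))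
    have h2 := F_mono (Nat.le_succ m) (nsh_ys hw m)
    have h3 := (F (m + 1)).sub_mem h1 h2
    rw [sub_sub_cancel] at h3
    have e : wd (ys m) * word w = wd (ys m ++ FreeMonoid.toList w) :=
      wd_mul (ys m) (FreeMonoid.toList w)
    rw [e] at h3
    exact h3
  obtain ⟨c, hc, hs⟩ := exists_rep (m + 1) _ hmem
  refine ⟨fun i => c i, ⟨fun i => hc i, ?_⟩, ?_⟩
  · rw [hs, Finset.sum_range]
  · rintro d ⟨hd, hds⟩
    set d' : ℕ → H := fun i => if h : i < m + 1 then d ⟨i, h⟩ else 0 with hd'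
    have hd'm : ∀ i, d' i ∈ F 1 := by
      intro i
      simp only [hd']
      split_ifs with h
      · exact hd _
      · exact (F 1).zero_mem
    have hd'e : ∀ i : Fin (m + 1), d' i = d i := fun i => dif_pos i.2
    have key := (unique_rep (m + 1) (fun i => d' i - c i)
      (fun i => (F 1).sub_mem (hd'm i) (hc i))).2 ?_
    · funext i
      rw [← hd'e]
      exact sub_eq_zero.1 (key i i.2)
    · simp only [← nshL_apply, map_sub, LinearMap.sub_apply, Finset.sum_sub_distrib]
      simp only [nshL_apply]
      rw [← hs, hds, Finset.sum_range, sub_eq_zero]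
      exact Finset.sum_congr rfl fun i _ => by rw [hd'e]
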